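/- Let (U≥0, U≤0) be a pre-weight structure on a triangulated category T with core C. Then for all integers m ≤ n one has U[m,n] = (Σ^{−n}C) ∗ (Σ^{1−n}C) ∗ ⋯ ∗ (Σ^{−m}C), where the operation ∗ is applied successively (it is associative). -/

import Mathlib

/-!
Since `U[m,m] = Σ^{-m}C`, the theorem follows by induction on `n - m` from the recursion
`U[m,n] = U[m+1,n] ∗ Σ^{-m}C` for `m < n` (`interval_eq_star`).

The inclusion `⊇` holds because `U[m+1,n]` and `U[m,m]` lie in `U[m,n]`, which is closed under
extensions. For `⊆`, shift the decomposition axiom to get a triangle `A → Z → B → A⟦1⟧` with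
`A ∈ U≥m+1` and `B ∈ U≤m`. Rotating it, `B` is an extension of `A⟦1⟧ ∈ U≥m` by `Z ∈ U≥m`, so
`B ∈ U≥m`; rotating it backwards, `A` is an extension of `Z ∈ U≤n` by `B⟦-1⟧ ∈ U≤m+1 ⊆ U≤n`, so
`A ∈ U≤n`. The left-associated chain matches this recursion, so neither associativity of `∗` nor
the octahedral axiom is needed.
-/

open CategoryTheory Category Limits Pretriangulated ZeroObject

universe v u

variable {T : Type u} [Category.{v} T] [HasZeroObject T] [HasShift T ℤ] [Preadditive T]
  [∀ n : ℤ, (CategoryTheory.shiftFunctor T n).Additive] [Pretriangulated T]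

/-- `Z ∈ star X Y` iff there is a distinguished triangle `A → Z → B → A⟦1⟧`
with `A ∈ X` and `B ∈ Y`. -/
def star (X Y : Set T) : Set T :=
  {Z | ∃ (A B : T) (f : A ⟶ Z) (g : Z ⟶ B) (h : B ⟶ A⟦(1:ℤ)⟧),
    A ∈ X ∧ B ∈ Y ∧ Triangle.mk f g h ∈ distTriang T}

/-- The cone of `f` lies in `S`. -/
def coneIn {A B : T} (f : A ⟶ B) (S : Set T) : Prop :=
  ∃ (Z : T) (g : B ⟶ Z) (h : Z ⟶ A⟦(1:ℤ)⟧),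
    Triangle.mk f g h ∈ (distTriang T) ∧ Z ∈ S

/-- `U≥m = Σ^{-m}(U≥0)`. -/
def geM (ge : Set T) (m : ℤ) : Set T := {X | X⟦m⟧ ∈ ge}

/-- `U≤m = Σ^{-m}(U≤0)`. -/
def leM (le : Set T) (m : ℤ) : Set T := {X | X⟦m⟧ ∈ le}

/-- `U[m,n] = U≥m ∩ U≤n`. -/
def interval (ge le : Set T) (m n : ℤ) : Set T := geM ge m ∩ leM le n

/-- The core `C = U≥0 ∩ U≤0`. -/
def coreSet (ge le : Set T) : Set T := ge ∩ le

/-- `Σ^{-k}(C)`. -/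
def coreShift (ge le : Set T) (k : ℤ) : Set T := {X | X⟦k⟧ ∈ coreSet ge le}

/-- `U₊ = ⋂ₘ U≥m`. -/
def plusSet (ge : Set T) : Set T := {X | ∀ m : ℤ, X ∈ geM ge m}

/-- `U₋ = ⋂ₘ U≤m`. -/
def minusSet (le : Set T) : Set T := {X | ∀ m : ℤ, X ∈ leM le m}

/-- `U_b = ⋃_{m ≤ n} U[m,n]`. -/
def boundedSet (ge le : Set T) : Set T :=
  {X | ∃ m n : ℤ, m ≤ n ∧ X ∈ interval ge le m n}

/-- A pre-weight structure: a pair of full additive subcategories (given by their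
classes of objects, closed under isomorphisms, containing the zero objects and closed
under finite biproducts) with `U≥0 ∗ Σ(U≤0) = T`, `U≥0` closed under `Σ⁻¹` and
extensions, and `U≤0` closed under `Σ` and extensions. -/
structure IsPreWeightStructure (ge le : Set T) : Prop where
  ge_iso : ∀ ⦃X Y : T⦄, (X ≅ Y) → X ∈ ge → Y ∈ ge
  le_iso : ∀ ⦃X Y : T⦄, (X ≅ Y) → X ∈ le → Y ∈ le
  ge_zero : ∀ Z : T, IsZero Z → Z ∈ ge
  le_zero : ∀ Z : T, IsZero Z → Z ∈ le
  ge_biprod : ∀ ⦃X Y : T⦄ (b : BinaryBicone X Y), b.IsBilimit → X ∈ ge → Y ∈ ge → b.pt ∈ ge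
  le_biprod : ∀ ⦃X Y : T⦄ (b : BinaryBicone X Y), b.IsBilimit → X ∈ le → Y ∈ le → b.pt ∈ le
  decomp : ∀ Z : T, Z ∈ star ge (leM le (-1))
  ge_shiftNeg : ∀ X ∈ ge, X⟦(-1:ℤ)⟧ ∈ ge
  ge_ext : star ge ge ⊆ ge
  le_shiftPos : ∀ X ∈ le, X⟦(1:ℤ)⟧ ∈ le
  le_ext : star le le ⊆ le

/-- The left-associated iterated star `(⋯((Σ^{-n}C ∗ Σ^{-(n-1)}C) ∗ Σ^{-(n-2)}C) ⋯) ∗ Σ^{-(n-j)}C`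
with `j+1` factors. -/
def coreChain (ge le : Set T) (n : ℤ) : ℕ → Set T
  | 0 => coreShift ge le n
  | j + 1 => star (coreChain ge le n j) (coreShift ge le (n - (j + 1)))

set_option linter.unusedSectionVars false in
lemma mem_shift_shift_iff {S : Set T} (hS : ∀ ⦃X Y : T⦄, (X ≅ Y) → X ∈ S → Y ∈ S)
    (X : T) (a b c : ℤ) (h : a + b = c) : X⟦a⟧⟦b⟧ ∈ S ↔ X⟦c⟧ ∈ S :=
  ⟨fun hX => hS ((shiftFunctorAdd' T a b c h).app X).symm hX,
    fun hX => hS ((shiftFunctorAdd' T a b c h).app X) hX⟩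

lemma shift_mem_star {X Y : Set T} {A Z B : T} {f : A ⟶ Z} {g : Z ⟶ B} {h : B ⟶ A⟦(1:ℤ)⟧}
    (hT : Triangle.mk f g h ∈ distTriang T) (k : ℤ) (hA : A⟦k⟧ ∈ X) (hB : B⟦k⟧ ∈ Y) :
    Z⟦k⟧ ∈ star X Y :=
  ⟨A⟦k⟧, B⟦k⟧, _, _, _, hA, hB, Triangle.shift_distinguished _ hT k⟩

lemma star_of_iso {X Y : Set T} {Z Z' : T} (e : Z ≅ Z') (hZ : Z ∈ star X Y) :
    Z' ∈ star X Y := by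
  obtain ⟨A, B, f, g, h, hA, hB, hT⟩ := hZ
  refine ⟨A, B, f ≫ e.hom, e.inv ≫ g, h, hA, hB, isomorphic_distinguished _ hT _ ?_⟩
  refine Triangle.isoMk _ _ (Iso.refl A) e.symm (Iso.refl B) ?_ ?_ ?_
  · change (f ≫ e.hom) ≫ e.inv = 𝟙 A ≫ f
    simp
  · change (e.inv ≫ g) ≫ 𝟙 B = e.inv ≫ g
    simp
  · change h ≫ (𝟙 A)⟦(1:ℤ)⟧' = 𝟙 B ≫ h
    simp

namespace IsPreWeightStructure

lemma geM_anti {ge le : Set T} (W : IsPreWeightStructure ge le)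
    {X : T} {a b : ℤ} (hab : a ≤ b) (hX : X ∈ geM ge b) : X ∈ geM ge a := by
  induction a, hab using Int.leInductionDown with
  | base => exact hX
  | pred k _ ih =>
    exact (mem_shift_shift_iff W.ge_iso X k (-1) (k - 1) (by lia)).1 (W.ge_shiftNeg _ ih)

lemma leM_mono {ge le : Set T} (W : IsPreWeightStructure ge le)
    {X : T} {a b : ℤ} (hab : a ≤ b) (hX : X ∈ leM le a) : X ∈ leM le b := by
  induction b, hab using Int.leInduction with
  | base => exact hX
  | succ k _ ih =>
    exact (mem_shift_shift_iff W.le_iso X k 1 (k + 1) rfl).1 (W.le_shiftPos _ ih)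

/-- The decomposition axiom shifted to weight `m`: `U≥m+1 ∗ U≤m` is everything. -/
lemma mem_star_geM_leM {ge le : Set T} (W : IsPreWeightStructure ge le)
    (m : ℤ) (Z : T) : Z ∈ star (geM ge (m + 1)) (leM le m) := by
  obtain ⟨A, B, f, g, h, hA, hB, hT⟩ := W.decomp (Z⟦m + 1⟧)
  refine star_of_iso ((shiftFunctorCompIsoId T (m + 1) (-(m + 1)) (by lia)).app Z)
    (shift_mem_star hT (-(m + 1)) ?_ ?_)
  · exact W.ge_iso ((shiftFunctorCompIsoId T (-(m + 1)) (m + 1) (by lia)).app A).symm hA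
  · exact (mem_shift_shift_iff W.le_iso B (-(m + 1)) m (-1) (by lia)).2 hB

lemma interval_eq_star {ge le : Set T} (W : IsPreWeightStructure ge le)
    {m n : ℤ} (hmn : m < n) :
    interval ge le m n = star (interval ge le (m + 1) n) (coreShift ge le m) := by
  ext Z
  constructor
  · rintro ⟨hZge, hZle⟩
    obtain ⟨A, B, f, g, h, hA, hB, hT⟩ := W.mem_star_geM_leM m Z
    refine ⟨A, B, f, g, h, ⟨hA, ?_⟩, ⟨?_, hB⟩, hT⟩
    · refine W.le_ext (shift_mem_star (inv_rot_of_distTriang _ hT) n ?_ hZle)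
      exact (mem_shift_shift_iff W.le_iso B (-1) n (n - 1) (by lia)).2
        (W.leM_mono (by lia) hB)
    · refine W.ge_ext (shift_mem_star (rot_of_distTriang _ hT) m hZge ?_)
      exact (mem_shift_shift_iff W.ge_iso A 1 m (m + 1) (by lia)).2 hA
  · rintro ⟨A, B, f, g, h, ⟨hAge, hAle⟩, ⟨hBge, hBle⟩, hT⟩
    exact ⟨W.ge_ext (shift_mem_star hT m (W.geM_anti (by lia) hAge) hBge),
      W.le_ext (shift_mem_star hT n hAle (W.leM_mono hmn.le hBle))⟩

lemma interval_sub_eq_coreChain {ge le : Set T} (W : IsPreWeightStructure ge le)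
    (n : ℤ) (j : ℕ) :
    interval ge le (n - j) n = coreChain ge le n j := by
  induction j with
  | zero =>
    rw [Nat.cast_zero, sub_zero]
    rfl
  | succ j ih =>
    rw [W.interval_eq_star (by lia), show n - ((j + 1 : ℕ) : ℤ) + 1 = n - j by lia, ih,
      Nat.cast_succ]
    rfl

end IsPreWeightStructure

/-- Lemma 2.4(5): for a pre-weight structure `(U≥0, U≤0)` with core `C`
and `m ≤ n`, `U[m,n] = (Σ^{-n}C) ∗ (Σ^{1-n}C) ∗ ⋯ ∗ (Σ^{-m}C)`. -/
theorem preWeightStructure_interval_eq_coreChain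
    {ge le : Set T} (W : IsPreWeightStructure ge le) (m n : ℤ) (hmn : m ≤ n) :
    interval ge le m n = coreChain ge le n (n - m).toNat := by
  have h := W.interval_sub_eq_coreChain n (n - m).toNat
  rwa [show n - ((n - m).toNat : ℤ) = m by lia] at h
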